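/- Let k : [0,∞) → ℝ be convex, differentiable and with k′(t) < 0 for all t ≥ 0, and set g = −k′. Let x₁, …, xₙ ∈ ℝ^d, let H be a symmetric positive definite d×d matrix, set q_i(y) = (y−x_i)^⊤ H^{−1} (y−x_i), and define the mean shift sequence Y₀ ∈ ℝ^d arbitrary and Y_{j+1} = (∑_{i=1}^n x_i g(q_i(Y_j))) / (∑_{i=1}^n g(q_i(Y_j))). Then the real sequence j ↦ ∑_{i=1}^n k(q_i(Y_j)) is nondecreasing, bounded above by n·k(0), and hence convergent; equivalently, the sequence of density estimate values f̂_H(Y_j) = n^{−1}(det H)^{−1/2}(1/2)∑_i k(q_i(Y_j)) converges. -/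

import Mathlib

/-!
A convex profile lies above its tangents, `k(s) - k(t) ≥ g(t) (t - s)`. Summing over the data
points with `t = q_i(Y_j)` and `s = q_i(Y_{j+1})` bounds the increment of `∑ᵢ k(q_i(Y_j))` below by
`∑ᵢ g_i (q_i(Y_j) - q_i(Y_{j+1}))`, where `g_i = g(q_i(Y_j))`. As `Y_{j+1}` is the `g_i`-weighted
mean of the data points, the cross terms cancel in the expansion of `q_i` around `Y_{j+1}` (the
parallel axis theorem), and this bound equals `(∑ᵢ g_i) (Y_j - Y_{j+1})ᵀ H⁻¹ (Y_j - Y_{j+1}) ≥ 0`.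
-/

open MeasureTheory Matrix Filter

/-- The quadratic form `q_i(y) = (y − x_i)ᵀ H⁻¹ (y − x_i)`. -/
noncomputable def msQuad {d n : ℕ} (H : Matrix (Fin d) (Fin d) ℝ) (x : Fin n → (Fin d → ℝ))
    (i : Fin n) (y : Fin d → ℝ) : ℝ :=
  (y - x i) ⬝ᵥ H⁻¹.mulVec (y - x i)

/-- `g = −k′` for a profile `k` defined on `[0,∞)`. -/
noncomputable def msG (k : ℝ → ℝ) (t : ℝ) : ℝ :=
  -(derivWithin k (Set.Ici 0) t)

/-- The number `p t` is, for each `t ∈ S`, a subgradient of `f` at `t` relative to `S`. With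
`p = -g`, this is all that the mean shift argument needs to know about a profile `f` and its
weight function `g`. -/
def IsSubgradientOn (S : Set ℝ) (f p : ℝ → ℝ) : Prop :=
  ∀ ⦃s⦄, s ∈ S → ∀ ⦃t⦄, t ∈ S → f t + p t * (s - t) ≤ f s

theorem isSubgradientOn_derivWithin {S : Set ℝ} {f : ℝ → ℝ} (hf : ConvexOn ℝ S f)
    (hf' : DifferentiableOn ℝ f S) : IsSubgradientOn S f (derivWithin f S) := by
  intro s hs t ht
  rcases lt_trichotomy s t with hst | rfl | hts
  · have hslope := hf.slope_le_derivWithin hs ht hst (hf' t ht)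
    rw [slope_def_field, div_le_iff₀ (sub_pos.2 hst)] at hslope
    linarith
  · simp
  · have hslope := hf.derivWithin_le_slope ht hs hts (hf' t ht)
    rw [slope_def_field, le_div_iff₀ (sub_pos.2 hts)] at hslope
    linarith

theorem IsSubgradientOn.antitoneOn {S : Set ℝ} {f p : ℝ → ℝ} (h : IsSubgradientOn S f p)
    (hp : ∀ t ∈ S, p t ≤ 0) : AntitoneOn f S := by
  intro s hs t ht hst
  have hslope : 0 ≤ p t * (s - t) := mul_nonneg_of_nonpos_of_nonpos (hp t ht) (sub_nonpos.2 hst)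
  linarith [h hs ht]

theorem sum_smul_centerMass {R E ι : Type*} [Field R] [LinearOrder R] [IsStrictOrderedRing R]
    [AddCommGroup E] [Module R E] {s : Finset ι} {w : ι → R} (hw : ∀ i ∈ s, 0 ≤ w i) (x : ι → E) :
    (∑ i ∈ s, w i) • s.centerMass w x = ∑ i ∈ s, w i • x i := by
  by_cases hsum : ∑ i ∈ s, w i = 0
  · have hw_zero := (Finset.sum_eq_zero_iff_of_nonneg hw).1 hsum
    rw [hsum, zero_smul, Finset.sum_eq_zero fun i hi => by rw [hw_zero i hi, zero_smul]]
  · exact smul_inv_smul₀ hsum _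

theorem sum_smul_quadraticMap_sub {R M N ι : Type*} [CommRing R] [AddCommGroup M] [Module R M]
    [AddCommGroup N] [Module R N] (Q : QuadraticMap R M N) {s : Finset ι} {w : ι → R} {x : ι → M}
    {z : M} (hz : (∑ i ∈ s, w i) • z = ∑ i ∈ s, w i • x i) (y : M) :
    ∑ i ∈ s, w i • (Q (y - x i) - Q (z - x i)) = (∑ i ∈ s, w i) • Q (y - z) := by
  have hexpand (i : ι) :
      Q (y - x i) - Q (z - x i) = Q (y - z) + Q.polarBilin (y - z) (z - x i) := by
    rw [← sub_add_sub_cancel y z (x i), QuadraticMap.map_add Q, QuadraticMap.polarBilin_apply_apply]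
    abel
  have hmean : ∑ i ∈ s, w i • (z - x i) = 0 := by
    simp only [smul_sub, Finset.sum_sub_distrib, ← Finset.sum_smul, hz, sub_self]
  have hcross : ∑ i ∈ s, w i • Q.polarBilin (y - z) (z - x i) = 0 := by
    simp only [← map_smul, ← map_sum, hmean, map_zero]
  simp only [hexpand, smul_add, Finset.sum_add_distrib, hcross, add_zero, Finset.sum_smul]

section QuadraticForm

variable {E ι : Type*} [AddCommGroup E] [Module ℝ E] {k g : ℝ → ℝ} {Q : QuadraticForm ℝ E}
  {s : Finset ι} {x : ι → E}

/-- One step `y ↦ z` of the mean shift iteration: `z` is the mean of the points `x i` with weights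
`g (Q (y - x i))`. The equation is free of division: where all the weights vanish, every `z` is
allowed, instead of only the junk value `0⁻¹ • 0 = 0`. -/
def IsMeanShiftStep (g : ℝ → ℝ) (Q : QuadraticForm ℝ E) (s : Finset ι) (x : ι → E) (y z : E) :
    Prop :=
  (∑ i ∈ s, g (Q (y - x i))) • z = ∑ i ∈ s, g (Q (y - x i)) • x i

theorem isMeanShiftStep_centerMass (hg : ∀ t, 0 ≤ t → 0 ≤ g t) (hQ : ∀ v, 0 ≤ Q v) (y : E) :
    IsMeanShiftStep g Q s x y (s.centerMass (fun i => g (Q (y - x i))) x) :=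
  sum_smul_centerMass (fun _ _ => hg _ (hQ _)) x

theorem IsMeanShiftStep.sum_mul_le_sum_sub_sum {y z : E} (hstep : IsMeanShiftStep g Q s x y z)
    (hk : IsSubgradientOn (Set.Ici 0) k (-g)) (hQ : ∀ v, 0 ≤ Q v) :
    (∑ i ∈ s, g (Q (y - x i))) * Q (y - z)
      ≤ ∑ i ∈ s, k (Q (z - x i)) - ∑ i ∈ s, k (Q (y - x i)) := by
  have htangent (i : ι) : g (Q (y - x i)) * (Q (y - x i) - Q (z - x i))
      ≤ k (Q (z - x i)) - k (Q (y - x i)) := by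
    have h := hk (hQ (z - x i)) (hQ (y - x i))
    rw [Pi.neg_apply] at h
    linarith
  calc (∑ i ∈ s, g (Q (y - x i))) * Q (y - z)
      = ∑ i ∈ s, g (Q (y - x i)) * (Q (y - x i) - Q (z - x i)) :=
        (sum_smul_quadraticMap_sub Q hstep y).symm
    _ ≤ ∑ i ∈ s, (k (Q (z - x i)) - k (Q (y - x i))) := Finset.sum_le_sum fun i _ => htangent i
    _ = ∑ i ∈ s, k (Q (z - x i)) - ∑ i ∈ s, k (Q (y - x i)) := Finset.sum_sub_distrib ..

theorem IsMeanShiftStep.sum_le_sum {y z : E} (hstep : IsMeanShiftStep g Q s x y z)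
    (hk : IsSubgradientOn (Set.Ici 0) k (-g)) (hg : ∀ t, 0 ≤ t → 0 ≤ g t) (hQ : ∀ v, 0 ≤ Q v) :
    ∑ i ∈ s, k (Q (y - x i)) ≤ ∑ i ∈ s, k (Q (z - x i)) :=
  sub_nonneg.1 <| (mul_nonneg (Finset.sum_nonneg fun _ _ => hg _ (hQ _)) (hQ _)).trans
    (hstep.sum_mul_le_sum_sub_sum hk hQ)

theorem meanShift_kde_values_converge_general (hk : IsSubgradientOn (Set.Ici 0) k (-g))
    (hg : ∀ t, 0 ≤ t → 0 ≤ g t) (hQ : ∀ v, 0 ≤ Q v) {Y : ℕ → E}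
    (hY : ∀ j, IsMeanShiftStep g Q s x (Y j) (Y (j + 1))) :
    Monotone (fun j => ∑ i ∈ s, k (Q (Y j - x i)))
      ∧ (∀ j, ∑ i ∈ s, k (Q (Y j - x i)) ≤ s.card * k 0)
      ∧ ∃ l : ℝ, Tendsto (fun j => ∑ i ∈ s, k (Q (Y j - x i))) atTop (nhds l) := by
  have hmono : Monotone (fun j => ∑ i ∈ s, k (Q (Y j - x i))) :=
    monotone_nat_of_le_succ fun j => (hY j).sum_le_sum hk hg hQ
  have hanti : AntitoneOn k (Set.Ici 0) := hk.antitoneOn fun t ht => neg_nonpos.2 (hg t ht)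
  have hbound (j : ℕ) : ∑ i ∈ s, k (Q (Y j - x i)) ≤ s.card * k 0 := by
    rw [← nsmul_eq_mul]
    exact Finset.sum_le_card_nsmul _ _ _ fun i _ => hanti Set.self_mem_Ici (hQ _) (hQ _)
  exact ⟨hmono, hbound, _, tendsto_atTop_ciSup hmono ⟨_, Set.forall_mem_range.2 hbound⟩⟩

end QuadraticForm

theorem msQuad_eq_toQuadraticForm' {d n : ℕ} (H : Matrix (Fin d) (Fin d) ℝ)
    (x : Fin n → (Fin d → ℝ)) (i : Fin n) (y : Fin d → ℝ) :
    msQuad H x i y = H⁻¹.toQuadraticForm' (y - x i) :=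
  (toLinearMap₂'_apply' H⁻¹ (y - x i) (y - x i)).symm

theorem isSubgradientOn_neg_msG {k : ℝ → ℝ} (hconv : ConvexOn ℝ (Set.Ici 0) k)
    (hdiff : DifferentiableOn ℝ k (Set.Ici 0)) : IsSubgradientOn (Set.Ici 0) k (-msG k) := by
  have hneg : -msG k = derivWithin k (Set.Ici 0) := funext fun _ => neg_neg _
  exact hneg ▸ isSubgradientOn_derivWithin hconv hdiff

/-- Convergence of the density estimate values along the mean shift iterates: if the profile
`k : [0,∞) → ℝ` is convex, differentiable with `k′ < 0` on `[0,∞)`, `g = −k′`, and the mean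
shift sequence is `Y_{j+1} = (∑ᵢ x_i g(q_i(Y_j))) / (∑ᵢ g(q_i(Y_j)))` with
`q_i(y) = (y−x_i)ᵀ H⁻¹ (y−x_i)`, then `j ↦ ∑ᵢ k(q_i(Y_j))` is nondecreasing, bounded above by
`n·k(0)`, and hence convergent; equivalently the kernel density estimate values
`f̂_H(Y_j) = n⁻¹ (det H)^{−1/2} (1/2) ∑ᵢ k(q_i(Y_j))` converge. -/
theorem meanShift_kde_values_converge {d n : ℕ} (k : ℝ → ℝ)
    (hconv : ConvexOn ℝ (Set.Ici 0) k)
    (hdiff : DifferentiableOn ℝ k (Set.Ici 0))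
    (hder : ∀ t : ℝ, 0 ≤ t → derivWithin k (Set.Ici 0) t < 0)
    (x : Fin n → (Fin d → ℝ)) (H : Matrix (Fin d) (Fin d) ℝ) (hH : H.PosDef)
    (Y : ℕ → (Fin d → ℝ))
    (hY : ∀ j, Y (j + 1)
      = (∑ i, msG k (msQuad H x i (Y j)))⁻¹ • ∑ i, msG k (msQuad H x i (Y j)) • x i) :
    Monotone (fun j => ∑ i, k (msQuad H x i (Y j)))
      ∧ (∀ j, ∑ i, k (msQuad H x i (Y j)) ≤ n * k 0)
      ∧ ∃ l : ℝ, Tendsto (fun j => ∑ i, k (msQuad H x i (Y j))) atTop (nhds l) := by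
  have hg (t : ℝ) (ht : 0 ≤ t) : 0 ≤ msG k t := neg_nonneg.2 (hder t ht).le
  have hQ := hH.inv.toQuadraticForm'.nonneg
  simp only [msQuad_eq_toQuadraticForm'] at hY ⊢
  have hstep (j : ℕ) :
      IsMeanShiftStep (msG k) H⁻¹.toQuadraticForm' Finset.univ x (Y j) (Y (j + 1)) := by
    rw [hY j]
    exact isMeanShiftStep_centerMass hg hQ (Y j)
  simpa only [Finset.card_univ, Fintype.card_fin] using
    meanShift_kde_values_converge_general (isSubgradientOn_neg_msG hconv hdiff) hg hQ hstep
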